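/- Let γ ∈ [0,+∞), let φ ∈ Γ₀(ℝ) be even with 0 in the interior of dom φ, set Φ = φ ∘ ‖·‖ on H, and let x ∈ H. Then Φ(prox_{γ⊙Φ} x) = φ(prox_{γ⊙φ}‖x‖). -/

import Mathlib

open scoped Classical

noncomputable section

/-- Effective domain of an extended-real-valued function. -/
def edom {E : Type*} (f : E → EReal) : Set E := {x | f x < ⊤}

/-- Convexity of an extended-real-valued function, via its epigraph. -/
def ConvexEpi {E : Type*} [AddCommGroup E] [Module ℝ E] (f : E → EReal) : Prop :=
  Convex ℝ {p : E × ℝ | f p.1 ≤ (p.2 : EReal)}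

/-- `f ∈ Γ₀(E)`: proper, lower semicontinuous, convex, with values in `(-∞, +∞]`. -/
def IsGamma0 {E : Type*} [AddCommGroup E] [Module ℝ E] [TopologicalSpace E]
    (f : E → EReal) : Prop :=
  (∃ x, f x ≠ ⊤) ∧ (∀ x, f x ≠ ⊥) ∧ LowerSemicontinuous f ∧ ConvexEpi f

/-- Proximity operator: the (unique, for `f ∈ Γ₀`) minimizer of
`y ↦ f y + ‖x - y‖² / 2`. -/
def prox {E : Type*} [NormedAddCommGroup E] [InnerProductSpace ℝ E]
    (f : E → EReal) (x : E) : E :=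
  Classical.epsilon fun p =>
    ∀ y, f p + ((‖x - p‖ ^ 2 / 2 : ℝ) : EReal) ≤ f y + ((‖x - y‖ ^ 2 / 2 : ℝ) : EReal)

/-- Metric projection onto a set. -/
def projC {E : Type*} [NormedAddCommGroup E] (C : Set E) (x : E) : E :=
  Classical.epsilon fun p => p ∈ C ∧ ∀ y ∈ C, ‖x - p‖ ≤ ‖x - y‖

/-- Fenchel conjugate. -/
def fconj {E : Type*} [NormedAddCommGroup E] [InnerProductSpace ℝ E]
    (f : E → EReal) (y : E) : EReal :=
  ⨆ x, ((inner ℝ x y : ℝ) : EReal) - f x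

/-- Plain scalar multiple `ξ·f`. -/
def smulE {E : Type*} (ξ : ℝ) (f : E → EReal) : E → EReal := fun x => (ξ : EReal) * f x

/-- The operation `ξ ⊙ f`: indicator of `cl (dom f)` if `ξ = 0`, and `ξ·f` if `ξ > 0`. -/
def rscale {E : Type*} [TopologicalSpace E] (ξ : ℝ) (f : E → EReal) : E → EReal :=
  if ξ = 0 then fun x => if x ∈ closure (edom f) then (0 : EReal) else ⊤
  else fun x => (ξ : EReal) * f x

/-- `f^∨`: agrees with `f` where `-∞ < f < 0`, and is `+∞` elsewhere. -/
def pbas {E : Type*} (f : E → EReal) : E → EReal :=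
  fun x => if ⊥ < f x ∧ f x < 0 then f x else ⊤

/-- `f^∧`: agrees with `f` where `0 < f < +∞`, and is `+∞` elsewhere. -/
def phaut {E : Type*} (f : E → EReal) : E → EReal :=
  fun x => if 0 < f x ∧ f x < ⊤ then f x else ⊤

/-- `f_▽ = (f^∨)**`. -/
def basEnv {E : Type*} [NormedAddCommGroup E] [InnerProductSpace ℝ E]
    (f : E → EReal) : E → EReal :=
  fconj (fconj (pbas f))

/-- `f_▲ = (f^∧)**`. -/
def hautEnv {E : Type*} [NormedAddCommGroup E] [InnerProductSpace ℝ E]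
    (f : E → EReal) : E → EReal :=
  fconj (fconj (phaut f))

/-- `S = s⁻¹((0, +∞))`. -/
def sdom {G : Type*} (s : G → EReal) : Set G := {v | 0 < s v ∧ s v < ⊤}

/-- The preperspective `φ ⋉ s`, on the Hilbert direct sum `H ⊕ G`. -/
def prePersp {H G : Type*} [NormedAddCommGroup H] [InnerProductSpace ℝ H]
    [NormedAddCommGroup G] [InnerProductSpace ℝ G]
    (φ : H → EReal) (s : G → EReal) : WithLp 2 (H × G) → EReal := fun q =>
  if 0 < s ((WithLp.equiv 2 (H × G)) q).2 ∧ s ((WithLp.equiv 2 (H × G)) q).2 < ⊤ then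
    s ((WithLp.equiv 2 (H × G)) q).2 *
      φ ((s ((WithLp.equiv 2 (H × G)) q).2).toReal⁻¹ • ((WithLp.equiv 2 (H × G)) q).1)
  else ⊤

/-- The perspective `φ ▷ s`: the largest lower semicontinuous convex minorant of the
preperspective `φ ⋉ s`, on the Hilbert direct sum `H ⊕ G`. -/
def persp {H G : Type*} [NormedAddCommGroup H] [InnerProductSpace ℝ H]
    [NormedAddCommGroup G] [InnerProductSpace ℝ G]
    (φ : H → EReal) (s : G → EReal) : WithLp 2 (H × G) → EReal := fun q =>
  sSup {t : EReal | ∃ g : WithLp 2 (H × G) → EReal,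
    LowerSemicontinuous g ∧ ConvexEpi g ∧ (∀ r, g r ≤ prePersp φ s r) ∧ t = g q}

/-- The point `(x, y)` in the Hilbert direct sum `H ⊕ G`. -/
def pairHG {H G : Type*} (x : H) (y : G) : WithLp 2 (H × G) :=
  (WithLp.equiv 2 (H × G)).symm (x, y)

end

/-!
Since `|‖x‖ - ‖z‖| ≤ ‖x - z‖`, with equality along the segment from `0` to `x`, minimizing
`ψ ‖z‖ + ‖x - z‖² / 2` over `z` amounts to minimizing `ψ t + (‖x‖ - t)² / 2` over `t`, provided the
latter has a minimizer in `[0, ‖x‖]`. An even convex `ψ` is nondecreasing in `|t|`, so projecting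
onto `[0, ‖x‖]` never increases the objective, and lower semicontinuity yields a minimizer there.
Strict convexity then gives `‖prox_{ψ ∘ ‖·‖} x‖ = prox_ψ ‖x‖`. Finally `γ ⊙ (φ ∘ ‖·‖)` equals
`(γ ⊙ φ) ∘ ‖·‖`, also for `γ = 0` because `dom φ` is balanced, so `ψ = γ ⊙ φ` is the case at hand.
-/

section ConvexEpi

variable {E : Type*} [AddCommGroup E] [Module ℝ E] {f : E → EReal}

theorem ConvexEpi.quasiconvexOn (hf : ConvexEpi f) : QuasiconvexOn ℝ Set.univ f := by
  rintro r x ⟨-, hx⟩ y ⟨-, hy⟩ a b ha hb hab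
  refine ⟨Set.mem_univ _, EReal.le_of_forall_lt_iff_le.1 fun z hz => ?_⟩
  have hxz : (x, z) ∈ {p : E × ℝ | f p.1 ≤ (p.2 : EReal)} := hx.trans hz.le
  have hyz : (y, z) ∈ {p : E × ℝ | f p.1 ≤ (p.2 : EReal)} := hy.trans hz.le
  simpa [← add_mul, hab] using hf hxz hyz ha hb hab

theorem ConvexEpi.convex_edom (hf : ConvexEpi f) : Convex ℝ (edom f) := by
  simpa only [Set.mem_univ, true_and, edom] using hf.quasiconvexOn.convex_lt ⊤

theorem ConvexEpi.balanced_edom (hf : ConvexEpi f) (heven : f.Even) : Balanced ℝ (edom f) :=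
  (balanced_iff_neg_mem hf.convex_edom).2 fun x (hx : f x < ⊤) => (heven x).trans_lt hx

theorem ConvexEpi.apply_smul_le (hf : ConvexEpi f) (heven : f.Even) {c : ℝ} (hc : |c| ≤ 1)
    (x : E) : f (c • x) ≤ f x := by
  have hconv : Convex ℝ {y | f y ≤ f x} := by
    simpa only [Set.mem_univ, true_and] using hf.quasiconvexOn (f x)
  have hbal : Balanced ℝ {y | f y ≤ f x} :=
    (balanced_iff_neg_mem hconv).2 fun y (hy : f y ≤ f x) => (heven y).trans_le hy
  exact hbal.smul_mem hc (le_refl (f x))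

theorem ConvexEpi.apply_le_apply_of_abs_le_abs {φ : ℝ → EReal} (hφ : ConvexEpi φ)
    (heven : φ.Even) {s t : ℝ} (hst : |s| ≤ |t|) : φ s ≤ φ t := by
  have hs : s / t * t = s := div_mul_cancel_of_imp fun ht => by simpa [ht] using hst
  have hc : |s / t| ≤ 1 := by
    rw [abs_div]
    exact div_le_one_of_le₀ hst (abs_nonneg t)
  simpa only [smul_eq_mul, hs] using hφ.apply_smul_le heven hc t

theorem ConvexEpi.apply_midpoint_le (hf : ConvexEpi f) {x y : E} {a b : ℝ}
    (hx : f x ≤ a) (hy : f y ≤ b) : f (midpoint ℝ x y) ≤ (midpoint ℝ a b : ℝ) :=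
  Convex.midpoint_mem hf (x := (x, a)) (y := (y, b)) hx hy

theorem convexEpi_smulE (hf : ConvexEpi f) {γ : ℝ} (hγ : 0 < γ) : ConvexEpi (smulE γ f) := by
  have hepi : {p : E × ℝ | smulE γ f p.1 ≤ (p.2 : EReal)} =
      (LinearMap.id.prodMap (γ⁻¹ • LinearMap.id) : E × ℝ →ₗ[ℝ] E × ℝ) ⁻¹'
        {p | f p.1 ≤ (p.2 : EReal)} := by
    ext ⟨x, r⟩
    change (γ : EReal) * f x ≤ r ↔ f x ≤ (γ⁻¹ * r : ℝ)
    rw [inv_mul_eq_div, EReal.coe_div,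
      EReal.le_div_iff_mul_le (EReal.coe_pos.2 hγ) (EReal.coe_ne_top γ), mul_comm]
  rw [ConvexEpi, hepi]
  exact Convex.linear_preimage hf _

theorem convexEpi_indicator_compl_top {C : Set E} (hC : Convex ℝ C) :
    ConvexEpi (Cᶜ.indicator fun _ => ⊤) := by
  have hepi : {p : E × ℝ | Cᶜ.indicator (fun _ => (⊤ : EReal)) p.1 ≤ (p.2 : EReal)} =
      C ×ˢ Set.Ici 0 := by
    ext ⟨x, r⟩
    by_cases hx : x ∈ C <;> simp [hx]
  rw [ConvexEpi, hepi]
  exact hC.prod (convex_Ici 0)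

end ConvexEpi

section Scaling

theorem smulE_ne_bot {E : Type*} {f : E → EReal} {x : E} (hx : f x ≠ ⊥) {γ : ℝ} (hγ : 0 ≤ γ) :
    smulE γ f x ≠ ⊥ :=
  (EReal.mul_ne_bot _ _).2 ⟨.inl (EReal.coe_ne_bot γ), .inr hx, .inl (EReal.coe_ne_top γ),
    .inl (EReal.coe_nonneg.2 hγ)⟩

theorem smulE_ne_top {E : Type*} {f : E → EReal} {x : E} (hx : f x ≠ ⊤) {γ : ℝ} (hγ : 0 ≤ γ) :
    smulE γ f x ≠ ⊤ :=
  (EReal.mul_ne_top _ _).2 ⟨.inl (EReal.coe_ne_bot γ), .inl (EReal.coe_nonneg.2 hγ),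
    .inl (EReal.coe_ne_top γ), .inr hx⟩

theorem continuous_ereal_coe_mul (γ : ℝ) : Continuous fun a : EReal => (γ : EReal) * a :=
  continuous_iff_continuousAt.2 fun _ => EReal.Tendsto.const_mul Filter.tendsto_id
    (.inl (EReal.coe_ne_bot γ)) (.inl (EReal.coe_ne_top γ))

theorem lowerSemicontinuous_smulE {E : Type*} [TopologicalSpace E] {f : E → EReal}
    (hf : LowerSemicontinuous f) {γ : ℝ} (hγ : 0 ≤ γ) : LowerSemicontinuous (smulE γ f) :=
  (continuous_ereal_coe_mul γ).comp_lowerSemicontinuous hf fun _ _ hab =>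
    mul_le_mul_of_nonneg_left hab (EReal.coe_nonneg.2 hγ)

section TopologicalSpace

variable {E : Type*} [TopologicalSpace E]

theorem rscale_zero (f : E → EReal) :
    rscale 0 f = (closure (edom f))ᶜ.indicator fun _ => ⊤ := by
  ext x
  by_cases hx : x ∈ closure (edom f) <;> simp [rscale, hx]

theorem rscale_of_ne_zero {γ : ℝ} (hγ : γ ≠ 0) (f : E → EReal) : rscale γ f = smulE γ f :=
  if_neg hγ

theorem even_rscale [InvolutiveNeg E] [ContinuousNeg E] {f : E → EReal} (hf : f.Even) (γ : ℝ) :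
    (rscale γ f).Even := by
  intro x
  have hdom : -edom f = edom f := by
    ext y
    simp only [edom, Set.mem_neg, Set.mem_ofPred_eq, hf y]
  have hcl : -x ∈ closure (edom f) ↔ x ∈ closure (edom f) := by
    rw [← Set.mem_neg, neg_closure, hdom]
  simp only [rscale]
  split_ifs
  · simp only [hcl]
  · simp only [hf x]

end TopologicalSpace

theorem isGamma0_rscale {E : Type*} [AddCommGroup E] [Module ℝ E] [TopologicalSpace E]
    [IsTopologicalAddGroup E] [ContinuousConstSMul ℝ E] {f : E → EReal} (hf : IsGamma0 f)
    {γ : ℝ} (hγ : 0 ≤ γ) : IsGamma0 (rscale γ f) := by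
  obtain ⟨⟨x, hx⟩, hbot, hlsc, hconv⟩ := hf
  rcases hγ.eq_or_lt with rfl | hγ
  · rw [rscale_zero]
    have hxcl : x ∈ closure (edom f) := subset_closure hx.lt_top
    refine ⟨⟨x, by simp [hxcl]⟩, fun y => ?_,
      isClosed_closure.isOpen_compl.lowerSemicontinuous_indicator le_top,
      convexEpi_indicator_compl_top hconv.convex_edom.closure⟩
    by_cases hy : y ∈ closure (edom f) <;> simp [hy]
  · rw [rscale_of_ne_zero hγ.ne']
    exact ⟨⟨x, smulE_ne_top hx hγ.le⟩, fun y => smulE_ne_bot (hbot y) hγ.le,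
      lowerSemicontinuous_smulE hlsc hγ.le, convexEpi_smulE hconv hγ⟩

end Scaling

section NormComposition

variable {E : Type*} [NormedAddCommGroup E] [NormedSpace ℝ E]

theorem mem_closure_preimage_norm_iff {s : Set ℝ} (hs : Balanced ℝ s) {z : E} :
    z ∈ closure (norm ⁻¹' s) ↔ ‖z‖ ∈ closure s := by
  refine ⟨fun hz => map_mem_closure continuous_norm hz (Set.mapsTo_preimage _ _), fun hz => ?_⟩
  -- The ray `t ↦ (t / ‖z‖) • z` is constantly `0` when `z = 0`, which balancedness absorbs.
  have hray : Continuous fun t : ℝ => (t / ‖z‖) • z := by fun_prop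
  have hmaps : Set.MapsTo (fun t : ℝ => (t / ‖z‖) • z) s (norm ⁻¹' s) := by
    intro t ht
    have hnorm : ‖(t / ‖z‖) • z‖ = (‖z‖ / ‖z‖) * |t| := by
      rw [norm_smul, norm_div, norm_norm, Real.norm_eq_abs]
      ring
    have habs : |t| ∈ s := by
      rcases abs_choice t with h | h <;> rw [h]
      exacts [ht, hs.neg_mem_iff.2 ht]
    rw [Set.mem_preimage, hnorm]
    exact hs.smul_mem (by simpa using div_self_le_one ‖z‖) habs
  have hend : (‖z‖ / ‖z‖) • z = z := by
    rcases eq_or_ne z 0 with rfl | hz0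
    · exact smul_zero _
    · rw [div_self (norm_ne_zero_iff.2 hz0), one_smul]
  simpa only [hend] using map_mem_closure hray hz hmaps

theorem rscale_comp_norm {φ : ℝ → EReal} (hφ : ConvexEpi φ) (heven : φ.Even) (γ : ℝ) :
    (rscale γ fun z : E => φ ‖z‖) = fun z => rscale γ φ ‖z‖ := by
  have hcl (z : E) : z ∈ closure (edom fun z : E => φ ‖z‖) ↔ ‖z‖ ∈ closure (edom φ) :=
    mem_closure_preimage_norm_iff (hφ.balanced_edom heven)
  ext z
  simp only [rscale, hcl]
  split_ifs <;> rfl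

theorem exists_norm_eq_and_norm_sub_eq (x : E) {r : ℝ} (hr : r ∈ Set.Icc 0 ‖x‖) :
    ∃ z : E, ‖z‖ = r ∧ ‖x - z‖ = ‖x‖ - r := by
  have hcancel : r / ‖x‖ * ‖x‖ = r :=
    div_mul_cancel_of_imp fun hx => le_antisymm (hx ▸ hr.2) hr.1
  have hle : r / ‖x‖ ≤ 1 := div_le_one_of_le₀ hr.2 (norm_nonneg x)
  refine ⟨(r / ‖x‖) • x, ?_, ?_⟩
  · rw [norm_smul_of_nonneg (div_nonneg hr.1 (norm_nonneg x)), hcancel]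
  · calc ‖x - (r / ‖x‖) • x‖ = ‖(1 - r / ‖x‖) • x‖ := by rw [sub_smul, one_smul]
      _ = ‖x‖ - r := by
        rw [norm_smul_of_nonneg (sub_nonneg.2 hle), sub_mul, one_mul, hcancel]

end NormComposition

section ProxPoint

/-- The function `y ↦ f y + ‖x - y‖² / 2` that a proximal point of `f` at `x` minimizes. -/
noncomputable def proxObjective {E : Type*} [NormedAddCommGroup E] (f : E → EReal) (x y : E) :
    EReal :=
  f y + ((‖x - y‖ ^ 2 / 2 : ℝ) : EReal)

/-- `p` is a proximal point of `f` at `x`: a minimizer of `y ↦ f y + ‖x - y‖² / 2`. It makes sense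
without existence or uniqueness, which `prox` presupposes. -/
def IsProxPoint {E : Type*} [NormedAddCommGroup E] (f : E → EReal) (x p : E) : Prop :=
  ∀ y, proxObjective f x p ≤ proxObjective f x y

theorem proxObjective_le_proxObjective {E F : Type*} [NormedAddCommGroup E]
    [NormedAddCommGroup F] {f : E → EReal} {g : F → EReal} {x p : E} {y q : F}
    (hval : f p ≤ g q) (hdist : ‖x - p‖ ≤ ‖y - q‖) :
    proxObjective f x p ≤ proxObjective g y q := by
  unfold proxObjective
  gcongr

theorem lowerSemicontinuous_proxObjective {E : Type*} [NormedAddCommGroup E] {f : E → EReal}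
    (hf : LowerSemicontinuous f) (x : E) : LowerSemicontinuous (proxObjective f x) := by
  have hquad : Continuous fun y => ((‖x - y‖ ^ 2 / 2 : ℝ) : EReal) :=
    continuous_coe_real_ereal.comp (by fun_prop)
  exact hf.add' hquad.lowerSemicontinuous fun y =>
    EReal.continuousAt_add (.inr (EReal.coe_ne_bot _)) (.inr (EReal.coe_ne_top _))

theorem IsProxPoint.apply_ne_top {E : Type*} [NormedAddCommGroup E] {f : E → EReal} {x p : E}
    (hp : IsProxPoint f x p) (hf : ∃ y, f y ≠ ⊤) : f p ≠ ⊤ := by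
  obtain ⟨y, hy⟩ := hf
  intro htop
  have hle : (⊤ : EReal) ≤ proxObjective f x y := by
    simpa [proxObjective, htop] using hp y
  exact (EReal.add_lt_top hy (EReal.coe_ne_top _)).not_ge hle

variable {E : Type*} [NormedAddCommGroup E] [InnerProductSpace ℝ E] {f : E → EReal} {x p q : E}

theorem isProxPoint_prox (hp : IsProxPoint f x p) : IsProxPoint f x (prox f x) :=
  Classical.epsilon_spec (p := IsProxPoint f x) ⟨p, hp⟩

theorem IsProxPoint.eq (hp : IsProxPoint f x p) (hq : IsProxPoint f x q)
    (hproper : ∃ y, f y ≠ ⊤) (hbot : ∀ y, f y ≠ ⊥) (hconv : ConvexEpi f) : p = q := by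
  obtain ⟨a, ha⟩ : ∃ a : ℝ, f p = a :=
    ⟨_, (EReal.coe_toReal (hp.apply_ne_top hproper) (hbot p)).symm⟩
  obtain ⟨b, hb⟩ : ∃ b : ℝ, f q = b :=
    ⟨_, (EReal.coe_toReal (hq.apply_ne_top hproper) (hbot q)).symm⟩
  have hmid : proxObjective f x (midpoint ℝ p q) ≤
      ((midpoint ℝ a b + ‖x - midpoint ℝ p q‖ ^ 2 / 2 : ℝ) : EReal) :=
    add_le_add_left (hconv.apply_midpoint_le ha.le hb.le) _
  have hp_le : a + ‖x - p‖ ^ 2 / 2 ≤ midpoint ℝ a b + ‖x - midpoint ℝ p q‖ ^ 2 / 2 :=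
    EReal.coe_le_coe_iff.1 <| by
      simpa only [proxObjective, ha, EReal.coe_add] using (hp _).trans hmid
  have hq_le : b + ‖x - q‖ ^ 2 / 2 ≤ midpoint ℝ a b + ‖x - midpoint ℝ p q‖ ^ 2 / 2 :=
    EReal.coe_le_coe_iff.1 <| by
      simpa only [proxObjective, hb, EReal.coe_add] using (hq _).trans hmid
  have hmid_eq : midpoint ℝ a b = (a + b) / 2 := by
    rw [midpoint_eq_smul_add, invOf_eq_inv, smul_eq_mul, inv_mul_eq_div]
  have happollonius : ‖x - p‖ ^ 2 + ‖x - q‖ ^ 2 =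
      2 * (‖x - midpoint ℝ p q‖ ^ 2 + (‖p - q‖ / 2) ^ 2) := by
    simpa only [dist_eq_norm] using
      EuclideanGeometry.dist_sq_add_dist_sq_eq_two_mul_dist_midpoint_sq_add_half_dist_sq x p q
  have hsq : ‖p - q‖ ^ 2 ≤ 0 := by linarith
  rwa [sq_nonpos_iff, norm_sub_eq_zero_iff] at hsq

theorem exists_isProxPoint_mem_Icc {ψ : ℝ → EReal} (hlsc : LowerSemicontinuous ψ)
    (hconv : ConvexEpi ψ) (heven : ψ.Even) {r : ℝ} (hr : 0 ≤ r) :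
    ∃ p ∈ Set.Icc 0 r, IsProxPoint ψ r p := by
  obtain ⟨p, hp, hmin⟩ := LowerSemicontinuousOn.exists_isMinOn (Set.nonempty_Icc.2 hr)
    isCompact_Icc ((lowerSemicontinuous_proxObjective hlsc r).lowerSemicontinuousOn _)
  refine ⟨p, hp, fun y => ?_⟩
  -- The projection onto `[0, r]` is 1-Lipschitz and fixes `0` and `r`.
  have habs : |(Set.projIcc 0 r hr y : ℝ)| ≤ |y| := by
    simpa using Set.abs_projIcc_sub_projIcc hr (c := y) (d := 0)
  have hdist : |r - Set.projIcc 0 r hr y| ≤ |r - y| := by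
    simpa using Set.abs_projIcc_sub_projIcc hr (c := r) (d := y)
  calc proxObjective ψ r p ≤ proxObjective ψ r (Set.projIcc 0 r hr y) :=
        hmin (Set.projIcc 0 r hr y).2
    _ ≤ proxObjective ψ r y :=
        proxObjective_le_proxObjective (hconv.apply_le_apply_of_abs_le_abs heven habs) hdist

theorem norm_prox_comp_norm {ψ : ℝ → EReal} (hψ : IsGamma0 ψ) (heven : ψ.Even) (x : E) :
    ‖prox (fun z : E => ψ ‖z‖) x‖ = prox ψ ‖x‖ := by
  have hle (z : E) : proxObjective ψ ‖x‖ ‖z‖ ≤ proxObjective (fun z : E => ψ ‖z‖) x z :=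
    proxObjective_le_proxObjective le_rfl (abs_norm_sub_norm_le x z)
  obtain ⟨hproper, hbot, hlsc, hconv⟩ := hψ
  obtain ⟨p, hpIcc, hp⟩ := exists_isProxPoint_mem_Icc hlsc hconv heven (norm_nonneg x)
  obtain ⟨z, hz, hxz⟩ := exists_norm_eq_and_norm_sub_eq x hpIcc
  have hzp : proxObjective (fun z : E => ψ ‖z‖) x z ≤ proxObjective ψ ‖x‖ p :=
    proxObjective_le_proxObjective (congrArg ψ hz).le (hxz.trans_le (le_abs_self _))
  have hzprox : IsProxPoint (fun z : E => ψ ‖z‖) x z := fun y =>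
    hzp.trans ((hp ‖y‖).trans (hle y))
  have hprox : IsProxPoint ψ ‖x‖ ‖prox (fun z : E => ψ ‖z‖) x‖ := fun y =>
    (hle _).trans ((isProxPoint_prox hzprox z).trans (hzp.trans (hp y)))
  exact hprox.eq (isProxPoint_prox hp) hproper hbot hconv

end ProxPoint

theorem stmt3_general {H : Type*} [NormedAddCommGroup H] [InnerProductSpace ℝ H] {γ : ℝ}
    (hγ : 0 ≤ γ) {φ : ℝ → EReal} (hφ : IsGamma0 φ) (heven : φ.Even) (x : H) :
    ‖prox (rscale γ fun z : H => φ ‖z‖) x‖ = prox (rscale γ φ) ‖x‖ := by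
  rw [rscale_comp_norm hφ.2.2.2 heven]
  exact norm_prox_comp_norm (isGamma0_rscale hφ hγ) (even_rscale heven γ) x

/-- Lemma 3.2(ii). `Φ(prox_{γ⊙Φ} x) = φ(prox_{γ⊙φ} ‖x‖)`. -/
theorem stmt3 {H : Type*} [NormedAddCommGroup H] [InnerProductSpace ℝ H] [CompleteSpace H]
    (γ : ℝ) (hγ : 0 ≤ γ) (φ : ℝ → EReal) (hφ : IsGamma0 φ)
    (heven : ∀ t : ℝ, φ (-t) = φ t) (h0 : (0 : ℝ) ∈ interior (edom φ)) (x : H) :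
    (fun z : H => φ ‖z‖) (prox (rscale γ (fun z : H => φ ‖z‖)) x)
      = φ (prox (rscale γ φ) ‖x‖) :=
  congrArg φ (stmt3_general hγ hφ heven x)
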